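/- arXiv:0903.3541 — 3 statements merged into one kernel-verified Lean document; each statement's English description precedes it below -/
import Mathlib

section
/- Let R be an integral domain with fraction field F. Let V, W and V', W' be finite-dimensional F-vector spaces equipped with perfect pairings B : V × W → F and B' : V' × W' → F (perfect meaning the induced linear maps V → W*, W → V*, V' → (W')*, W' → (V')* are bijective). Let i† : V → V' and j : W' → W be F-linear maps satisfying the adjunction B'(i†(v), w') = B(v, j(w')) for all v ∈ V and w' ∈ W'. Let M ⊆ V be an R-submodule such that i†(M) spans V' over F. Then the map sending w' to the restriction of the functional B'(·, w') to i†(M) is an R-module isomorphism from {w' ∈ W' : B(m, j(w')) ∈ R for all m ∈ M} onto Hom_R(i†(M), R). -/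
/-!
A functional `φ : i†(M) → R` is `R`-linear on an `R`-submodule of `V'` whose `F`-span is `V'`.
Every vector of `V'` is carried into `i†(M)` by a nonzero element of `R`, so `V'` is the
localization of `i†(M)` at the nonzero elements of `R` (`isLocalizedModule_subtype_of_span`).
By the universal property `φ` therefore extends to an `F`-linear functional on `V'`
(`exists_extension_of_span`), which is `B'(·, w')` for some `w'` because `B'` is perfect; the
adjunction puts `w'` in the dual lattice. Injectivity holds since `B'(·, w')` is determined by
its values on the spanning set `i†(M)`.
-/

/-- The "dual lattice" of an `R`-submodule `M ⊆ V` with respect to a pairing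
`B : V × W → F` and a map `j : W' → W`: the set of `w' ∈ W'` such that
`B m (j w')` lies in (the image of) `R` for all `m ∈ M`. -/
def pairingDualLattice (R : Type*) [CommRing R] (F : Type*) [Field F] [Algebra R F]
    {V W W' : Type*} [AddCommGroup V] [Module F V] [Module R V] [IsScalarTower R F V]
    [AddCommGroup W] [Module F W]
    [AddCommGroup W'] [Module F W'] [Module R W'] [IsScalarTower R F W']
    (B : V →ₗ[F] W →ₗ[F] F) (j : W' →ₗ[F] W) (M : Submodule R V) : Submodule R W' :=
  ⨅ (m : V) (_ : m ∈ M),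
    Submodule.comap (((B m).comp j).restrictScalars R)
      (LinearMap.range (Algebra.linearMap R F))

section

variable {R F U : Type*} [CommRing R] [Field F] [Algebra R F] [IsFractionRing R F]
  [AddCommGroup U] [Module F U] [Module R U] [IsScalarTower R F U]

/-- Denominators can be cleared: a vector in the `F`-span of an `R`-submodule `N` is carried into
`N` by some non-zero-divisor of `R`. -/
theorem exists_smul_mem_of_mem_span (N : Submodule R U) {v : U}
    (hv : v ∈ Submodule.span F (N : Set U)) : ∃ d ∈ nonZeroDivisors R, d • v ∈ N := by
  induction hv using Submodule.span_induction with
  | mem x hx => exact ⟨1, one_mem _, by simpa using hx⟩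
  | zero => exact ⟨1, one_mem _, by simp⟩
  | add x y _ _ hx hy =>
    obtain ⟨a, ha, hax⟩ := hx
    obtain ⟨b, hb, hby⟩ := hy
    refine ⟨a * b, mul_mem ha hb, ?_⟩
    rw [smul_add]
    refine N.add_mem ?_ ?_
    · rw [mul_comm, mul_smul]
      exact N.smul_mem b hax
    · rw [mul_smul]
      exact N.smul_mem a hby
  | smul c x _ hx =>
    obtain ⟨a, ha, hax⟩ := hx
    obtain ⟨⟨r, s⟩, hrs⟩ := IsLocalization.surj (nonZeroDivisors R) c
    refine ⟨s * a, mul_mem s.2 ha, ?_⟩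
    have h : ((s : R) * a) • c • x = r • a • x := by
      rw [← algebraMap_smul F ((s : R) * a), ← algebraMap_smul F r, ← algebraMap_smul F a x,
        smul_smul, smul_smul, map_mul, ← hrs]
      congr 1
      ring
    rw [h]
    exact N.smul_mem r hax

variable (F) in
/-- If `N` spans `U` over `F`, then `U` is the localization of `N` at the nonzero elements
of `R`. -/
theorem isLocalizedModule_subtype_of_span (N : Submodule R U)
    (hN : Submodule.span F (N : Set U) = ⊤) :
    IsLocalizedModule (nonZeroDivisors R) N.subtype where
  map_units s := by
    have hs : algebraMap R F s ≠ 0 := (IsLocalization.map_units F s).ne_zero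
    rw [Module.End.isUnit_iff]
    have h : (algebraMap R (Module.End R U) s : U → U) = fun u => algebraMap R F s • u := by
      ext u
      simp
    rw [h]
    exact MulAction.bijective (Units.mk0 _ hs)
  surj v := by
    obtain ⟨d, hd, hdv⟩ := exists_smul_mem_of_mem_span (F := F) N (v := v) (by simp [hN])
    exact ⟨(⟨d • v, hdv⟩, ⟨d, hd⟩), rfl⟩
  exists_of_eq h := ⟨1, by simpa using h⟩

/-- An `R`-linear functional on a spanning `R`-submodule extends to an `F`-linear functional. -/
theorem exists_extension_of_span (N : Submodule R U)
    (hN : Submodule.span F (N : Set U) = ⊤) (φ : N →ₗ[R] R) :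
    ∃ ψ : U →ₗ[F] F, ∀ x : N, ψ x = algebraMap R F (φ x) := by
  have := isLocalizedModule_subtype_of_span F N hN
  let g : N →ₗ[R] F := Algebra.linearMap R F ∘ₗ φ
  have hu := IsLocalizedModule.map_units (S := nonZeroDivisors R) (Algebra.linearMap R F)
  let ψ : U →ₗ[R] F := IsLocalizedModule.lift (nonZeroDivisors R) N.subtype g hu
  refine ⟨ψ.extendScalarsOfIsLocalization (nonZeroDivisors R) F, fun x => ?_⟩
  exact IsLocalizedModule.lift_apply (nonZeroDivisors R) N.subtype g hu x

end

/-- Given perfect pairings `B : V × W → F`, `B' : V' × W' → F` of finite-dimensional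
vector spaces over the fraction field `F` of a domain `R`, adjoint maps `i† : V → V'`
and `j : W' → W`, and an `R`-submodule `M ⊆ V` with `i†(M)` spanning `V'`, the map
`w' ↦ B'(·, w')|_{i†(M)}` is an `R`-module isomorphism from
`{w' ∈ W' : B(m, j(w')) ∈ R for all m ∈ M}` onto `Hom_R(i†(M), R)`. -/
theorem dualLattice_isom_hom
    (R : Type*) [CommRing R] [IsDomain R]
    (F : Type*) [Field F] [Algebra R F] [IsFractionRing R F]
    (V W V' W' : Type*)
    [AddCommGroup V] [Module F V] [Module R V] [IsScalarTower R F V] [FiniteDimensional F V]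
    [AddCommGroup W] [Module F W] [FiniteDimensional F W]
    [AddCommGroup V'] [Module F V'] [Module R V'] [IsScalarTower R F V'] [FiniteDimensional F V']
    [AddCommGroup W'] [Module F W'] [Module R W'] [IsScalarTower R F W'] [FiniteDimensional F W']
    (B : V →ₗ[F] W →ₗ[F] F) (B' : V' →ₗ[F] W' →ₗ[F] F)
    (hB₁ : Function.Bijective B) (hB₂ : Function.Bijective B.flip)
    (hB'₁ : Function.Bijective B') (hB'₂ : Function.Bijective B'.flip)
    (idag : V →ₗ[F] V') (j : W' →ₗ[F] W)
    (hadj : ∀ (v : V) (w' : W'), B' (idag v) w' = B v (j w'))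
    (M : Submodule R V)
    (hspan : Submodule.span F (idag '' (M : Set V)) = ⊤) :
    (∀ w' : W', w' ∈ pairingDualLattice R F B j M ↔
        ∀ m ∈ M, ∃ r : R, algebraMap R F r = B m (j w')) ∧
    ∃ Φ : pairingDualLattice R F B j M →ₗ[R]
        ((Submodule.map (idag.restrictScalars R) M) →ₗ[R] R),
      Function.Bijective Φ ∧
      ∀ (w' : pairingDualLattice R F B j M)
        (x : Submodule.map (idag.restrictScalars R) M),
        algebraMap R F (Φ w' x) = B' (x : V') (w' : W') := by
  have hmem : ∀ w' : W', w' ∈ pairingDualLattice R F B j M ↔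
      ∀ m ∈ M, ∃ r : R, algebraMap R F r = B m (j w') := by
    intro w'
    simp [pairingDualLattice, Submodule.mem_iInf]
  refine ⟨hmem, ?_⟩
  set N := Submodule.map (idag.restrictScalars R) M with hNdef
  have hN : Submodule.span F (N : Set V') = ⊤ := by
    rw [← hspan]
    rfl
  have hinj : Function.Injective (algebraMap R F) := IsFractionRing.injective R F
  have hval : ∀ (w' : pairingDualLattice R F B j M) (x : N),
      ∃ r : R, algebraMap R F r = B' (x : V') (w' : W') := by
    rintro ⟨w', hw'⟩ ⟨_, m, hm, rfl⟩
    obtain ⟨r, hr⟩ := (hmem w').1 hw' m hm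
    exact ⟨r, hr.trans (hadj m w').symm⟩
  choose f hf using hval
  -- All identities for `f` are checked in `F`, where `f` becomes the restriction of `B'`.
  let Φ : pairingDualLattice R F B j M →ₗ[R] (N →ₗ[R] R) :=
    LinearMap.mk₂ R f
      (fun w₁ w₂ x => hinj (by simp [hf]))
      (fun r w x => hinj (by simp [hf, Algebra.smul_def]))
      (fun w x y => hinj (by simp [hf]))
      (fun r w x => hinj (by simp [hf, Algebra.smul_def]))
  have hΦ : ∀ w' x, algebraMap R F (Φ w' x) = B' (x : V') (w' : W') := hf
  refine ⟨Φ, ⟨?_, ?_⟩, hΦ⟩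
  · intro w₁ w₂ h
    apply Subtype.ext
    apply hB'₂.1
    refine LinearMap.ext_on hN fun x hx => ?_
    have := hΦ w₁ ⟨x, hx⟩
    rw [h, hΦ] at this
    exact this.symm
  · intro φ
    obtain ⟨ψ, hψ⟩ := exists_extension_of_span N hN φ
    obtain ⟨w', rfl⟩ := hB'₂.2 ψ
    have hw' : w' ∈ pairingDualLattice R F B j M := by
      rw [hmem]
      intro m hm
      exact ⟨φ ⟨idag m, m, hm, rfl⟩, (hψ ⟨idag m, m, hm, rfl⟩).symm.trans (hadj m w')⟩
    refine ⟨⟨w', hw'⟩, LinearMap.ext fun x => hinj ?_⟩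
    rw [hΦ]
    exact hψ x
end

section
/- Let R be a Dedekind domain with fraction field F, and let B : V × W → F be a perfect pairing of finite-dimensional F-vector spaces (the induced maps V → W* and W → V* are bijective). Let Λ₁ ⊆ Λ₀ ⊆ V be finitely generated R-submodules such that Λ₁ spans V over F. For an R-submodule Λ ⊆ V set Λ^∨ = {w ∈ W : B(x, w) ∈ R for all x ∈ Λ}. Then Λ₀^∨ ⊆ Λ₁^∨, and the assignment (x + Λ₁, w + Λ₀^∨) ↦ B(x, w) + R defines a well-defined R-bilinear pairing (Λ₀/Λ₁) × (Λ₁^∨/Λ₀^∨) → F/R which is perfect: both induced maps Λ₀/Λ₁ → Hom_R(Λ₁^∨/Λ₀^∨, F/R) and Λ₁^∨/Λ₀^∨ → Hom_R(Λ₀/Λ₁, F/R) are bijective. -/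
/-!
The whole proof rests on a finite dual basis for a lattice: if `Λ ⊆ V` is finitely generated and
spans `V`, then there are `e i ∈ Λ` and `f i ∈ Λ^∨` with `v = ∑ i, B v (f i) • e i` for all
`v : V` (`exists_dual_basis`). Indeed `Λ` is finitely generated and torsion-free over a Dedekind
domain, hence projective, so some surjection `Rⁿ → Λ` splits; the coordinates of the splitting
extend to `F`-linear forms on `V = F ⊗ Λ`, and these are represented by vectors `f i` because `B`
is perfect. Dually, `w = ∑ i, B (e i) w • f i` for all `w : W`.

Given such a system, every `R`-linear `φ : Λ → F/R` is of the form `x ↦ B x w + R`: take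
`w = ∑ i, c i • f i`, where `c i` lifts `φ (e i)` (`exists_represent`). The same argument with the
roles of `V` and `W` exchanged represents every functional on `Λ^∨` by a vector of `V`. The
representing vector of a functional on `Λ₀` that kills `Λ₁` lies in `Λ₁^∨`, which gives
surjectivity of one of the two maps. The representing vector of a functional on `Λ₁^∨` that kills
`Λ₀^∨` lies in `Λ₀^∨^∨ = Λ₀` (`mem_of_dual_dual`), which gives surjectivity of the other.
Injectivity of both maps is the definition of the dual lattice, and again `Λ₁^∨^∨ = Λ₁`.
-/

/-- The "dual lattice" `Λ^∨` of an `R`-submodule `Λ ⊆ V` with respect to a pairing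
`B : V × W → F`: the set of `w ∈ W` such that `B x w` lies in (the image of) `R`
for all `x ∈ Λ`. -/
def dualLattice (R : Type*) [CommRing R] (F : Type*) [Field F] [Algebra R F]
    {V W : Type*} [AddCommGroup V] [Module F V] [Module R V] [IsScalarTower R F V]
    [AddCommGroup W] [Module F W] [Module R W] [IsScalarTower R F W]
    (B : V →ₗ[F] W →ₗ[F] F) (Λ : Submodule R V) : Submodule R W :=
  ⨅ (x : V) (_ : x ∈ Λ),
    Submodule.comap ((B x).restrictScalars R)
      (LinearMap.range (Algebra.linearMap R F))

section LatticeDuality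

variable {R : Type*} [CommRing R] {F : Type*} [Field F] [Algebra R F]
  {V W : Type*}
  [AddCommGroup V] [Module F V] [Module R V] [IsScalarTower R F V]
  [AddCommGroup W] [Module F W] [Module R W] [IsScalarTower R F W]

theorem mem_dualLattice_iff (B : V →ₗ[F] W →ₗ[F] F) (Λ : Submodule R V) (w : W) :
    w ∈ dualLattice R F B Λ ↔ ∀ x ∈ Λ, ∃ r : R, algebraMap R F r = B x w := by
  simp [dualLattice, Submodule.mem_iInf]

/-- A spanning `R`-submodule `Λ` of `V` has `V` as its localization at the nonzero elements. -/
theorem isLocalizedModule_subtype [IsDomain R] [IsFractionRing R F] (Λ : Submodule R V)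
    (hspan : Submodule.span F (Λ : Set V) = ⊤) :
    IsLocalizedModule (nonZeroDivisors R) Λ.subtype where
  map_units s := by
    have h := (IsLocalization.map_units F s).map (Algebra.lsmul R R V : F →ₐ[R] Module.End R V)
    simpa using h
  surj y := by
    have hy : y ∈ Submodule.span F (Λ : Set V) := hspan ▸ Submodule.mem_top
    induction hy using Submodule.span_induction with
    | mem x hx => exact ⟨(⟨x, hx⟩, 1), by simp⟩
    | zero => exact ⟨(0, 1), by simp⟩
    | add x y _ _ hx hy =>
      obtain ⟨⟨a, s⟩, ha⟩ := hx
      obtain ⟨⟨b, t⟩, hb⟩ := hy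
      refine ⟨(t • a + s • b, s * t), ?_⟩
      simp only [Submonoid.smul_def, Submodule.subtype_apply, Submodule.coe_add,
        Submodule.coe_smul, Submonoid.coe_mul] at ha hb ⊢
      rw [← ha, ← hb, smul_add, smul_smul, smul_smul, mul_comm (t : R)]
    | smul q x _ hx =>
      obtain ⟨⟨a, s⟩, ha⟩ := hx
      obtain ⟨⟨p, t⟩, hp⟩ := IsLocalization.surj (nonZeroDivisors R) q
      refine ⟨(p • a, t * s), ?_⟩
      simp only [Submonoid.smul_def, Submodule.subtype_apply,
        Submodule.coe_smul, Submonoid.coe_mul] at ha hp ⊢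
      rw [← ha, ← algebraMap_smul F ((t : R) * s), ← algebraMap_smul F p,
        ← algebraMap_smul F (s : R), ← hp, map_mul, smul_smul, smul_smul]
      congr 1
      ring
  exists_of_eq {x y} h := ⟨1, by simpa using h⟩

/-- An `R`-valued functional on a spanning submodule is represented by a vector of `W`. -/
theorem exists_represent_dual [IsDomain R] [IsFractionRing R F]
    {W : Type*} [AddCommGroup W] [Module F W] (B : V →ₗ[F] W →ₗ[F] F)
    (hB₂ : Function.Surjective B.flip) (Λ : Submodule R V)
    (hspan : Submodule.span F (Λ : Set V) = ⊤) (g : Λ →ₗ[R] R) :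
    ∃ w : W, ∀ x : Λ, B x w = algebraMap R F (g x) := by
  have := isLocalizedModule_subtype (F := F) Λ hspan
  have hu : ∀ s : nonZeroDivisors R, IsUnit (algebraMap R (Module.End R F) s) := by
    intro s
    have h := (IsLocalization.map_units F s).map (Algebra.lsmul R R F : F →ₐ[R] Module.End R F)
    simpa using h
  let G : V →ₗ[R] F := IsLocalizedModule.lift (nonZeroDivisors R) Λ.subtype
    ((Algebra.linearMap R F).comp g) hu
  obtain ⟨w, hw⟩ := hB₂ (G.extendScalarsOfIsLocalization (nonZeroDivisors R) F)
  refine ⟨w, fun x ↦ ?_⟩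
  have h := LinearMap.congr_fun hw (x : V)
  rw [LinearMap.flip_apply] at h
  rw [h]
  exact IsLocalizedModule.lift_apply (nonZeroDivisors R) Λ.subtype _ hu x

/-- A finitely generated spanning submodule `Λ` over a Dedekind domain has a finite dual basis:
vectors `e i ∈ Λ` and `f i ∈ Λ^∨` with `v = ∑ i, B v (f i) • e i`. The `e i` need not be linearly
independent. -/
theorem exists_dual_basis [IsDedekindDomain R] [IsFractionRing R F]
    (B : V →ₗ[F] W →ₗ[F] F) (hB₂ : Function.Surjective B.flip) (Λ : Submodule R V) (hfg : Λ.FG)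
    (hspan : Submodule.span F (Λ : Set V) = ⊤) :
    ∃ (n : ℕ) (e : Fin n → V) (f : Fin n → W), (∀ i, e i ∈ Λ) ∧
      (∀ i, f i ∈ dualLattice R F B Λ) ∧ ∀ v, ∑ i, B v (f i) • e i = v := by
  have : Module.Finite R Λ := Module.Finite.iff_fg.mpr hfg
  have : Module.IsTorsionFree R F := inferInstance
  have : Module.IsTorsionFree R V := Module.IsTorsionFree.trans_faithfulSMul R F V
  have : Module.FinitePresentation R Λ := Module.finitePresentation_of_finite R Λ
  have : Module.Projective R Λ := Module.Flat.projective_of_finitePresentation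
  obtain ⟨n, p, hp⟩ := Module.Finite.exists_fin' R Λ
  obtain ⟨s, hs⟩ := p.exists_rightInverse_of_surjective (LinearMap.range_eq_top.2 hp)
  choose f hf using fun i : Fin n ↦
    exists_represent_dual B hB₂ Λ hspan ((LinearMap.proj i).comp s)
  refine ⟨n, fun i ↦ p (Pi.single i 1), f, fun i ↦ (p _).2, fun i ↦ ?_, fun v ↦ ?_⟩
  · rw [mem_dualLattice_iff]
    exact fun x hx ↦ ⟨_, (hf i ⟨x, hx⟩).symm⟩
  · -- Both sides are `F`-linear in `v`, so it suffices to compare them on `Λ`.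
    have key : (∑ i, (B.flip (f i)).smulRight (p (Pi.single i 1) : V)) = LinearMap.id := by
      refine LinearMap.ext_on hspan fun x hx ↦ ?_
      have h1 : p (s ⟨x, hx⟩) = ⟨x, hx⟩ := LinearMap.congr_fun hs _
      rw [← Finset.univ_sum_single (s ⟨x, hx⟩), map_sum] at h1
      have h2 := congrArg Subtype.val h1
      simp only [AddSubmonoidClass.coe_finsetSum] at h2
      simp only [LinearMap.sum_apply, LinearMap.smulRight_apply, LinearMap.flip_apply,
        LinearMap.id_apply]
      refine Eq.trans (Finset.sum_congr rfl fun i _ ↦ ?_) h2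
      rw [hf i ⟨x, hx⟩, algebraMap_smul, ← Submodule.coe_smul, ← map_smul]
      congr 2
      simp [← Pi.single_smul]
    simpa using LinearMap.congr_fun key v

/-- The expansion in the second variable dual to `v = ∑ i, B v (f i) • e i`. -/
theorem dual_expansion (B : V →ₗ[F] W →ₗ[F] F) (hB₂ : Function.Injective B.flip)
    {n : ℕ} {e : Fin n → V} {f : Fin n → W} (h : ∀ v, ∑ i, B v (f i) • e i = v) (w : W) :
    ∑ i, B (e i) w • f i = w := by
  apply hB₂
  ext v
  conv_rhs => rw [← h v]
  simp [mul_comm]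

/-- Half of the double duality `Λ^∨^∨ = Λ`, for a submodule with a dual basis. -/
theorem mem_of_dual_dual (B : V →ₗ[F] W →ₗ[F] F) {Λ : Submodule R V}
    {n : ℕ} {e : Fin n → V} {f : Fin n → W} (he : ∀ i, e i ∈ Λ)
    (hf : ∀ i, f i ∈ dualLattice R F B Λ) (h : ∀ v, ∑ i, B v (f i) • e i = v) {v : V}
    (hv : ∀ w ∈ dualLattice R F B Λ, ∃ r : R, algebraMap R F r = B v w) : v ∈ Λ := by
  rw [← h v]
  refine Submodule.sum_mem _ fun i _ ↦ ?_
  obtain ⟨r, hr⟩ := hv _ (hf i)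
  rw [← hr, algebraMap_smul]
  exact Λ.smul_mem _ (he i)

/-- A functional `φ : Λ → F/R` on a submodule with a dual basis is represented by the vector
`∑ i, c i • f i`, where `c i ∈ F` lifts `φ (e i)`. The hypotheses are symmetric enough to apply to
`B.flip` and the dual lattice as well. -/
theorem exists_represent (B : V →ₗ[F] W →ₗ[F] F) (Λ : Submodule R V)
    {n : ℕ} {e : Fin n → V} {f : Fin n → W} (he : ∀ i, e i ∈ Λ)
    (hf : ∀ i, ∀ x ∈ Λ, ∃ r : R, algebraMap R F r = B x (f i))
    (h : ∀ v, ∑ i, B v (f i) • e i = v)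
    (φ : Λ →ₗ[R] F ⧸ LinearMap.range (Algebra.linearMap R F)) :
    ∃ w : W, ∀ x : Λ, φ x = Submodule.Quotient.mk (B x w) := by
  choose c hc using fun i ↦ Submodule.Quotient.mk_surjective _ (φ ⟨e i, he i⟩)
  refine ⟨∑ i, c i • f i, fun x ↦ ?_⟩
  choose r hr using fun i ↦ hf i x x.2
  have hx : x = ∑ i, r i • (⟨e i, he i⟩ : Λ) := by
    apply Subtype.ext
    rw [← h x]
    simp only [AddSubmonoidClass.coe_finsetSum, Submodule.coe_smul]
    exact Finset.sum_congr rfl fun i _ ↦ by rw [← hr, algebraMap_smul]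
  have hBx : B x (∑ i, c i • f i) = ∑ i, r i • c i := by
    simp only [map_sum, map_smul, ← hr]
    exact Finset.sum_congr rfl fun i _ ↦ by rw [smul_eq_mul, Algebra.smul_def, mul_comm]
  rw [hBx]
  conv_lhs => rw [hx]
  simp only [map_sum, map_smul, ← hc, ← Submodule.mkQ_apply]

end LatticeDuality

/-- Let `R` be a Dedekind domain with fraction field `F`, `B : V × W → F` a perfect
pairing of finite-dimensional `F`-vector spaces and `Λ₁ ⊆ Λ₀ ⊆ V` finitely generated
`R`-submodules with `Λ₁` spanning `V`. Then `Λ₀^∨ ⊆ Λ₁^∨`, and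
`(x + Λ₁, w + Λ₀^∨) ↦ B(x, w) + R` is a well-defined perfect `R`-bilinear pairing
`(Λ₀/Λ₁) × (Λ₁^∨/Λ₀^∨) → F/R`. -/
theorem quotient_pairing_perfect
    (R : Type*) [CommRing R] [IsDomain R] [IsDedekindDomain R]
    (F : Type*) [Field F] [Algebra R F] [IsFractionRing R F]
    (V W : Type*)
    [AddCommGroup V] [Module F V] [Module R V] [IsScalarTower R F V] [FiniteDimensional F V]
    [AddCommGroup W] [Module F W] [Module R W] [IsScalarTower R F W] [FiniteDimensional F W]
    (B : V →ₗ[F] W →ₗ[F] F)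
    (hB₁ : Function.Bijective B) (hB₂ : Function.Bijective B.flip)
    (Λ₀ Λ₁ : Submodule R V) (hle : Λ₁ ≤ Λ₀) (hfg₀ : Λ₀.FG) (hfg₁ : Λ₁.FG)
    (hspan : Submodule.span F (Λ₁ : Set V) = ⊤) :
    (∀ (Λ : Submodule R V) (w : W), w ∈ dualLattice R F B Λ ↔
        ∀ x ∈ Λ, ∃ r : R, algebraMap R F r = B x w) ∧
    dualLattice R F B Λ₀ ≤ dualLattice R F B Λ₁ ∧
    ∃ P : (↥Λ₀ ⧸ Λ₁.comap Λ₀.subtype) →ₗ[R]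
        (↥(dualLattice R F B Λ₁) ⧸
          (dualLattice R F B Λ₀).comap (dualLattice R F B Λ₁).subtype) →ₗ[R]
        (F ⧸ LinearMap.range (Algebra.linearMap R F)),
      (∀ (x : Λ₀) (w : dualLattice R F B Λ₁),
        P (Submodule.Quotient.mk x) (Submodule.Quotient.mk w) =
          Submodule.Quotient.mk (B (x : V) (w : W))) ∧
      Function.Bijective P ∧ Function.Bijective P.flip := by
  have hle' : dualLattice R F B Λ₀ ≤ dualLattice R F B Λ₁ := by
    intro w hw
    rw [mem_dualLattice_iff] at hw ⊢
    exact fun x hx ↦ hw x (hle hx)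
  refine ⟨mem_dualLattice_iff B, hle', ?_⟩
  have hspan₀ : Submodule.span F (Λ₀ : Set V) = ⊤ :=
    top_le_iff.mp (hspan ▸ Submodule.span_mono hle)
  obtain ⟨n₀, e₀, f₀, he₀, hf₀, h₀⟩ := exists_dual_basis B hB₂.2 Λ₀ hfg₀ hspan₀
  obtain ⟨n₁, e₁, f₁, he₁, hf₁, h₁⟩ := exists_dual_basis B hB₂.2 Λ₁ hfg₁ hspan
  have mk_zero : ∀ a : F,
      (Submodule.Quotient.mk a : F ⧸ LinearMap.range (Algebra.linearMap R F)) = 0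
      ↔ ∃ r : R, algebraMap R F r = a := fun a ↦ by
    rw [Submodule.Quotient.mk_eq_zero]; rfl
  let Q : Λ₀ →ₗ[R] (dualLattice R F B Λ₁) →ₗ[R] (F ⧸ LinearMap.range (Algebra.linearMap R F)) :=
    LinearMap.mk₂ R (fun x w ↦ Submodule.Quotient.mk (B (x : V) (w : W)))
      (fun x y w ↦ by simp)
      (fun r x w ↦ by
        rw [Submodule.coe_smul, ← algebraMap_smul F r (x : V), map_smul, LinearMap.smul_apply,
          algebraMap_smul, Submodule.Quotient.mk_smul])
      (fun x w z ↦ by simp)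
      (fun r x w ↦ by
        rw [Submodule.coe_smul, ← algebraMap_smul F r (w : W), map_smul,
          algebraMap_smul, Submodule.Quotient.mk_smul])
  have hQ : ∀ x w, Q x w = Submodule.Quotient.mk (B (x : V) (w : W)) := fun _ _ ↦ rfl
  let Q' : Λ₀ →ₗ[R] (↥(dualLattice R F B Λ₁) ⧸
      (dualLattice R F B Λ₀).comap (dualLattice R F B Λ₁).subtype) →ₗ[R]
      (F ⧸ LinearMap.range (Algebra.linearMap R F)) :=
    LinearMap.flip (Submodule.liftQ _ Q.flip (fun w hw ↦ by
      rw [LinearMap.mem_ker]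
      ext x
      rw [LinearMap.flip_apply, hQ, LinearMap.zero_apply, mk_zero]
      exact (mem_dualLattice_iff B Λ₀ _).mp hw x x.2))
  have hQ' : ∀ (x : Λ₀) (w : dualLattice R F B Λ₁),
      Q' x (Submodule.Quotient.mk w) = Submodule.Quotient.mk (B (x : V) (w : W)) := fun _ _ ↦ rfl
  let P := Submodule.liftQ (Λ₁.comap Λ₀.subtype) Q' (fun x hx ↦ by
      rw [LinearMap.mem_ker]
      refine LinearMap.ext fun w ↦ ?_
      obtain ⟨w, rfl⟩ := Submodule.Quotient.mk_surjective _ w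
      rw [hQ', LinearMap.zero_apply, mk_zero]
      exact (mem_dualLattice_iff B Λ₁ _).mp w.2 x hx)
  have hP : ∀ (x : Λ₀) (w : dualLattice R F B Λ₁),
      P (Submodule.Quotient.mk x) (Submodule.Quotient.mk w) =
        Submodule.Quotient.mk (B (x : V) (w : W)) := fun _ _ ↦ rfl
  refine ⟨P, hP, ⟨?_, ?_⟩, ⟨?_, ?_⟩⟩
  · rw [injective_iff_map_eq_zero]
    intro x hx
    obtain ⟨x, rfl⟩ := Submodule.Quotient.mk_surjective _ x
    rw [Submodule.Quotient.mk_eq_zero]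
    refine mem_of_dual_dual B he₁ hf₁ h₁ fun w hw ↦ ?_
    rw [← mk_zero]
    exact LinearMap.congr_fun hx (Submodule.Quotient.mk ⟨w, hw⟩)
  · intro ψ
    obtain ⟨v, hv⟩ := exists_represent B.flip (dualLattice R F B Λ₁) hf₁
      (fun i w hw ↦ (mem_dualLattice_iff B Λ₁ w).mp hw _ (he₁ i))
      (dual_expansion B hB₂.1 h₁) (ψ.comp (Submodule.mkQ _))
    have hvΛ : v ∈ Λ₀ := by
      refine mem_of_dual_dual B he₀ hf₀ h₀ fun w hw ↦ ?_
      have hψ := hv ⟨w, hle' hw⟩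
      rw [← mk_zero, ← B.flip_apply, ← hψ, LinearMap.comp_apply, Submodule.mkQ_apply,
        (Submodule.Quotient.mk_eq_zero _).mpr (show (⟨w, hle' hw⟩ : dualLattice R F B Λ₁) ∈
          (dualLattice R F B Λ₀).comap (dualLattice R F B Λ₁).subtype from hw), map_zero]
    refine ⟨Submodule.Quotient.mk ⟨v, hvΛ⟩, LinearMap.ext fun w ↦ ?_⟩
    obtain ⟨w, rfl⟩ := Submodule.Quotient.mk_surjective _ w
    rw [hP]
    exact (hv w).symm
  · rw [injective_iff_map_eq_zero]
    intro w hw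
    obtain ⟨w, rfl⟩ := Submodule.Quotient.mk_surjective _ w
    rw [Submodule.Quotient.mk_eq_zero]
    refine (mem_dualLattice_iff B Λ₀ _).mpr fun x hx ↦ ?_
    rw [← mk_zero]
    exact LinearMap.congr_fun hw (Submodule.Quotient.mk ⟨x, hx⟩)
  · intro φ
    obtain ⟨w, hw⟩ := exists_represent B Λ₀ he₀
      (fun i ↦ (mem_dualLattice_iff B Λ₀ _).mp (hf₀ i)) h₀ (φ.comp (Submodule.mkQ _))
    have hwΛ : w ∈ dualLattice R F B Λ₁ := by
      refine (mem_dualLattice_iff B Λ₁ w).mpr fun x hx ↦ ?_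
      have hφ := hw ⟨x, hle hx⟩
      rw [← mk_zero, ← hφ, LinearMap.comp_apply, Submodule.mkQ_apply,
        (Submodule.Quotient.mk_eq_zero _).mpr (show (⟨x, hle hx⟩ : Λ₀) ∈
          Λ₁.comap Λ₀.subtype from hx), map_zero]
    refine ⟨Submodule.Quotient.mk ⟨w, hwΛ⟩, LinearMap.ext fun x ↦ ?_⟩
    obtain ⟨x, rfl⟩ := Submodule.Quotient.mk_surjective _ x
    rw [LinearMap.flip_apply, hP]
    exact (hw x).symm
end

section
/- Let R be a commutative ring, p a prime ideal of R, and N a finitely generated R-module whose localization N_p at p is nonzero. Let A = (a_{ij}) be a 2×2 matrix with entries in R such that det(A) = a₁₁a₂₂ − a₁₂a₂₁ ∈ p, and let φ_A : N ⊕ N → N ⊕ N be the R-linear map (v₁, v₂) ↦ (a₁₁·v₁ + a₁₂·v₂, a₂₁·v₁ + a₂₂·v₂). Then the localization at p of the cokernel (N ⊕ N)/image(φ_A) is nonzero; equivalently, p lies in the support of the cokernel of φ_A. -/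
/-!
If `p` were not in the support of the cokernel, some `s ∉ p` would annihilate this finitely
generated module, i.e. `s • (N × N) ⊆ range φ`. By Nakayama (`Module.support_quotient`), `p` is in
the support of `N / pN`, so every scalar carrying `N` into `pN` lies in `p`. Applying
Cramer's rule to a preimage of `s • (0, n)` shows that `s * a₁₁` and `s * a₁₂` carry `N` into
`det • N ⊆ pN`, hence `a₁₁, a₁₂ ∈ p`. But then the first coordinate of every element of `range φ`
is in `pN`, so `s` itself carries `N` into `pN`, giving `s ∈ p`, a contradiction.
-/

/-- The form of Nakayama's lemma used below: `Ann (N / pN) ⊆ p` when `N` is finitely generated and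
`p` is in its support. -/
lemma mem_prime_of_smul_mem_smul_top {R : Type*} [CommRing R] (p : Ideal R) [p.IsPrime]
    {N : Type*} [AddCommGroup N] [Module R N] [Module.Finite R N]
    (hN : Nontrivial (LocalizedModule p.primeCompl N)) {r : R}
    (hr : ∀ n : N, r • n ∈ (p • ⊤ : Submodule R N)) : r ∈ p := by
  have hp : (⟨p, inferInstance⟩ : PrimeSpectrum R) ∈
      Module.support R (N ⧸ (p • ⊤ : Submodule R N)) := by
    rw [Module.support_quotient]
    exact ⟨hN, le_refl (p : Set R)⟩
  refine Module.annihilator_le_of_mem_support hp (Module.mem_annihilator.mpr fun x => ?_)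
  obtain ⟨n, rfl⟩ := Submodule.Quotient.mk_surjective _ x
  rw [← Submodule.Quotient.mk_smul, Submodule.Quotient.mk_eq_zero]
  exact hr n


/-- If `N` is a finitely generated `R`-module with nonzero localization at a prime `p`,
and `A` is a `2 × 2` matrix over `R` with determinant in `p`, then the cokernel of the
induced map `φ_A : N ⊕ N → N ⊕ N` has nonzero localization at `p`, i.e. `p` lies in
the support of the cokernel. -/
theorem localization_cokernel_nontrivial
    (R : Type*) [CommRing R] (p : Ideal R) [p.IsPrime]
    (N : Type*) [AddCommGroup N] [Module R N] [Module.Finite R N]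
    (hN : Nontrivial (LocalizedModule p.primeCompl N))
    (a₁₁ a₁₂ a₂₁ a₂₂ : R) (hdet : a₁₁ * a₂₂ - a₁₂ * a₂₁ ∈ p)
    (φ : N × N →ₗ[R] N × N)
    (hφ : ∀ v : N × N, φ v = (a₁₁ • v.1 + a₁₂ • v.2, a₂₁ • v.1 + a₂₂ • v.2)) :
    Nontrivial (LocalizedModule p.primeCompl ((N × N) ⧸ LinearMap.range φ)) := by
  by_contra hQ
  have hs : ∃ s ∉ p, ∀ v : N × N, s • v ∈ LinearMap.range φ := by
    have h : ¬ Module.annihilator R ((N × N) ⧸ LinearMap.range φ) ≤ p := fun h =>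
      hQ ((Module.mem_support_iff_of_finite (p := ⟨p, inferInstance⟩)).mpr h)
    obtain ⟨s, hs, hsp⟩ := SetLike.not_le_iff_exists.mp h
    refine ⟨s, hsp, fun v => ?_⟩
    rw [← Submodule.Quotient.mk_eq_zero, Submodule.Quotient.mk_smul]
    exact Module.mem_annihilator.mp hs _
  obtain ⟨s, hsp, hs⟩ := hs
  have key {r : R} (hr : ∀ n : N, r • n ∈ (p • ⊤ : Submodule R N)) : r ∈ p :=
    mem_prime_of_smul_mem_smul_top p hN hr
  have hmem {r : R} (hr : r ∈ p) (n : N) : r • n ∈ (p • ⊤ : Submodule R N) :=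
    Submodule.smul_mem_smul hr trivial
  have entry {a : R} (h : ∀ n : N, ∃ m : N, (s * a) • n = (a₁₁ * a₂₂ - a₁₂ * a₂₁) • m) :
      a ∈ p := by
    refine (Ideal.IsPrime.mem_or_mem inferInstance (key fun n => ?_)).resolve_left hsp
    obtain ⟨m, hm⟩ := h n
    exact hm ▸ hmem hdet m
  -- Cramer's rule computes the coordinates of a preimage of `s • (0, n)`, up to `det`.
  have right (n : N) : ∃ v w : N, a₁₁ • v + a₁₂ • w = 0 ∧ a₂₁ • v + a₂₂ • w = s • n := by
    obtain ⟨v, hv⟩ := hs (0, n)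
    rw [hφ] at hv
    exact ⟨v.1, v.2, by simpa using congrArg Prod.fst hv, by simpa using congrArg Prod.snd hv⟩
  have h₁₁ : a₁₁ ∈ p := entry fun n => by
    obtain ⟨v, w, h1, h2⟩ := right n
    refine ⟨w, ?_⟩
    linear_combination (norm := module) a₂₁ • h1 - a₁₁ • h2
  have h₁₂ : a₁₂ ∈ p := entry fun n => by
    obtain ⟨v, w, h1, h2⟩ := right n
    refine ⟨-v, ?_⟩
    linear_combination (norm := module) a₂₂ • h1 - a₁₂ • h2
  refine hsp (key fun n => ?_)
  obtain ⟨v, hv⟩ := hs (n, 0)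
  rw [hφ] at hv
  have h1 : a₁₁ • v.1 + a₁₂ • v.2 = s • n := congrArg Prod.fst hv
  exact h1 ▸ add_mem (hmem h₁₁ v.1) (hmem h₁₂ v.2)
end
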